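/- Assume the weights are symmetric (w(x,y) = w(y,x)) and the graph G with adjacency x ∼ y iff x ≠ y and w(x,y) > 0 is connected, and suppose G satisfies the condition CDE(n,−K) for some n > 0 and K > 0. Let R > 1, let x₀ ∈ V, and let u : V × ℝ → ℝ be a positive function, differentiable in t, such that Δu(·,t)(x) = ∂_t u(x,t) for all t > 0 and all x with dist(x₀,x) < 2R. Then for every α with 0 < α < 1, every t > 0, and every x with dist(x₀,x) < R: (1−α)Γ(√u(·,t))(x)/u(x,t) − (∂_t √(u(x,t)))/√(u(x,t)) ≤ min{ D_μ , n/((1−α)·2t) + n(2+D_w)D_μ/((1−α)R) + Kn/(2α) }. -/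

import Mathlib

open Finset

/-- The μ-Laplacian on a finite weighted graph:
`Δf(x) = (1/μ(x)) ∑_y w(x,y) (f(y) - f(x))`. -/
noncomputable def graphLap {V : Type*} [Fintype V] (w : V → V → ℝ) (μ : V → ℝ)
    (f : V → ℝ) (x : V) : ℝ :=
  (1 / μ x) * ∑ y, w x y * (f y - f x)

/-- The gradient form:
`Γ(f,g)(x) = (1/(2μ(x))) ∑_y w(x,y) (f(y) - f(x)) (g(y) - g(x))`. -/
noncomputable def graphGamma {V : Type*} [Fintype V] (w : V → V → ℝ) (μ : V → ℝ)
    (f g : V → ℝ) (x : V) : ℝ :=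
  (1 / (2 * μ x)) * ∑ y, w x y * (f y - f x) * (g y - g x)

/-- The iterated gradient form `Γ₂(f) = (1/2)(ΔΓ(f) - 2Γ(f, Δf))`. -/
noncomputable def graphGamma2 {V : Type*} [Fintype V] (w : V → V → ℝ) (μ : V → ℝ)
    (f : V → ℝ) (x : V) : ℝ :=
  (1 / 2) * (graphLap w μ (graphGamma w μ f f) x - 2 * graphGamma w μ f (graphLap w μ f) x)

/-- The modified iterated gradient form `Γ̃₂(f) = Γ₂(f) - Γ(f, Γ(f)/f)`. -/
noncomputable def graphGamma2Tilde {V : Type*} [Fintype V] (w : V → V → ℝ) (μ : V → ℝ)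
    (f : V → ℝ) (x : V) : ℝ :=
  graphGamma2 w μ f x - graphGamma w μ f (fun z => graphGamma w μ f f z / f z) x

/-- The exponential curvature-dimension condition `CDE(n, -K)`: for every vertex `x`
and every positive function `f` with `Δf(x) < 0`,
`Γ̃₂(f)(x) ≥ (1/n)(Δf(x))² - K Γ(f)(x)`. -/
def CDEneg {V : Type*} [Fintype V] (w : V → V → ℝ) (μ : V → ℝ) (n K : ℝ) : Prop :=
  ∀ x : V, ∀ f : V → ℝ, (∀ z, 0 < f z) → graphLap w μ f x < 0 →
    graphGamma2Tilde w μ f x ≥ (1 / n) * (graphLap w μ f x) ^ 2 - K * graphGamma w μ f f x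

section Helpers

variable {V : Type*} [Fintype V]

lemma lap_congr (w : V → V → ℝ) (hw : ∀ x y, 0 ≤ w x y) (μ : V → ℝ) (x : V) (g h : V → ℝ)
    (hx : g x = h x) (hy : ∀ y, 0 < w x y → g y = h y) : graphLap w μ g x = graphLap w μ h x := by
  unfold graphLap
  congr 1
  refine Finset.sum_congr rfl fun y _ => ?_
  rcases (hw x y).eq_or_lt with h0 | h0
  · rw [← h0]; ring
  · rw [hx, hy y h0]

lemma gamma_congr (w : V → V → ℝ) (hw : ∀ x y, 0 ≤ w x y) (μ : V → ℝ) (x : V) (f g h : V → ℝ)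
    (hx : g x = h x) (hy : ∀ y, 0 < w x y → g y = h y) :
    graphGamma w μ f g x = graphGamma w μ f h x := by
  unfold graphGamma
  congr 1
  refine Finset.sum_congr rfl fun y _ => ?_
  rcases (hw x y).eq_or_lt with h0 | h0
  · rw [← h0]; ring
  · rw [hx, hy y h0]

lemma gamma_add (w : V → V → ℝ) (μ : V → ℝ) (x : V) (f g h : V → ℝ) :
    graphGamma w μ f (fun z => g z + h z) x = graphGamma w μ f g x + graphGamma w μ f h x := by
  unfold graphGamma
  rw [← mul_add, ← Finset.sum_add_distrib]
  congr 1
  refine Finset.sum_congr rfl fun y _ => ?_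
  ring

lemma lap_lin (w : V → V → ℝ) (μ : V → ℝ) (x : V) (a b : ℝ) (g h : V → ℝ) :
    graphLap w μ (fun z => a * g z - b * h z) x
      = a * graphLap w μ g x - b * graphLap w μ h x := by
  unfold graphLap
  have : ∑ y, w x y * ((a * g y - b * h y) - (a * g x - b * h x))
      = a * ∑ y, w x y * (g y - g x) - b * ∑ y, w x y * (h y - h x) := by
    rw [Finset.mul_sum, Finset.mul_sum, ← Finset.sum_sub_distrib]
    refine Finset.sum_congr rfl fun y _ => ?_
    ring
  rw [this]
  ring

lemma gamma2_expand (w : V → V → ℝ) (μ : V → ℝ) (hμ : ∀ x, 0 < μ x) (x : V) (f A B C : V → ℝ) :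
    (1 / 2) * (graphLap w μ A x - 2 * graphGamma w μ f B x) - graphGamma w μ f C x
      = (1 / (2 * μ x)) * ∑ y, w x y * ((A y - A x) - (f y - f x) * (B y - B x)
          - (f y - f x) * (C y - C x)) := by
  unfold graphLap graphGamma
  have : ∑ y, w x y * ((A y - A x) - (f y - f x) * (B y - B x) - (f y - f x) * (C y - C x))
      = ∑ y, w x y * (A y - A x) - ∑ y, w x y * (f y - f x) * (B y - B x)
        - ∑ y, w x y * (f y - f x) * (C y - C x) := by
    rw [← Finset.sum_sub_distrib, ← Finset.sum_sub_distrib]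
    refine Finset.sum_congr rfl fun y _ => ?_
    ring
  rw [this]
  have := (hμ x).ne'
  field_simp

lemma lap_sq (w : V → V → ℝ) (μ : V → ℝ) (hμ : ∀ x, 0 < μ x) (f : V → ℝ) (x : V) :
    graphLap w μ (fun z => f z ^ 2) x
      = 2 * f x * graphLap w μ f x + 2 * graphGamma w μ f f x := by
  unfold graphLap graphGamma
  have hm := (hμ x).ne'
  have : ∑ y, w x y * (f y ^ 2 - f x ^ 2) = 2 * f x * ∑ y, w x y * (f y - f x)
      + ∑ y, w x y * (f y - f x) * (f y - f x) := by
    rw [Finset.mul_sum, ← Finset.sum_add_distrib]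
    refine Finset.sum_congr rfl fun y _ => ?_
    ring
  rw [this]
  field_simp

lemma gamma_nonneg (w : V → V → ℝ) (hw : ∀ x y, 0 ≤ w x y) (μ : V → ℝ) (hμ : ∀ x, 0 < μ x)
    (f : V → ℝ) (x : V) : 0 ≤ graphGamma w μ f f x := by
  unfold graphGamma
  have := hμ x
  refine mul_nonneg (by positivity) (Finset.sum_nonneg fun y _ => ?_)
  rw [mul_assoc]
  exact mul_nonneg (hw x y) (mul_self_nonneg _)

lemma neg_lap_le (w : V → V → ℝ) (hw : ∀ x y, 0 ≤ w x y) (μ : V → ℝ) (hμ : ∀ x, 0 < μ x)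
    (f : V → ℝ) (hf : ∀ z, 0 < f z) (x : V) (D : ℝ) (hD : (∑ y, w x y) / μ x ≤ D) :
    - graphLap w μ f x ≤ D * f x := by
  have h1 : - graphLap w μ f x ≤ (∑ y, w x y) / μ x * f x := by
    unfold graphLap
    have : (∑ y, w x y) / μ x * f x = (1 / μ x) * ∑ y, w x y * f x := by
      rw [← Finset.sum_mul]; ring
    rw [this, ← mul_neg, ← Finset.sum_neg_distrib]
    have := hμ x
    refine mul_le_mul_of_nonneg_left (Finset.sum_le_sum fun y _ => ?_) (by positivity)
    have := mul_nonneg (hw x y) (hf y).le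
    linarith
  exact h1.trans (mul_le_mul_of_nonneg_right hD (hf x).le)

/-- the second moment bound at a point with negative Laplacian -/
lemma sum_sq_le (w : V → V → ℝ) (hw : ∀ x y, 0 ≤ w x y) (μ : V → ℝ) (hμ : ∀ x, 0 < μ x)
    (f : V → ℝ) (hf : ∀ z, 0 < f z) (x : V) (D Dw : ℝ) (hD : (∑ y, w x y) / μ x ≤ D)
    (hDw0 : 0 ≤ Dw)
    (hDw : ∀ y, 0 < w x y → (∑ z, w x z) / w x y ≤ Dw) (hneg : graphLap w μ f x < 0) :
    (1 / μ x) * ∑ y, w x y * f y ^ 2 ≤ Dw * D * f x ^ 2 := by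
  have hm := hμ x
  have hfx := hf x
  have hs : ∑ y, w x y * f y ≤ (∑ y, w x y) * f x := by
    unfold graphLap at hneg
    by_contra hc
    push Not at hc
    have : 0 ≤ (1 / μ x) * ∑ y, w x y * (f y - f x) := by
      refine mul_nonneg (by positivity) ?_
      simp only [mul_sub, Finset.sum_sub_distrib, ← Finset.sum_mul]
      linarith
    linarith
  have hy : ∀ y, w x y * f y ^ 2 ≤ w x y * f y * (Dw * f x) := by
    intro y
    rcases (hw x y).eq_or_lt with h0 | h0
    · rw [← h0]; simp
    · have h1 : w x y * f y ≤ ∑ y, w x y * f y :=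
        Finset.single_le_sum (f := fun y => w x y * f y)
          (fun i _ => mul_nonneg (hw x i) (hf i).le) (Finset.mem_univ y)
      have h2 := hDw y h0
      rw [div_le_iff₀ h0] at h2
      have h3 : w x y * f y ≤ w x y * (Dw * f x) := by
        calc _ ≤ (∑ y, w x y) * f x := h1.trans hs
          _ ≤ Dw * w x y * f x := mul_le_mul_of_nonneg_right h2 hfx.le
          _ = _ := by ring
      have h4 := le_of_mul_le_mul_left h3 h0
      have := mul_le_mul_of_nonneg_left h4 (mul_nonneg (hw x y) (hf y).le)
      calc _ = w x y * f y * f y := by ring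
        _ ≤ _ := this
  calc (1 / μ x) * ∑ y, w x y * f y ^ 2 ≤ (1 / μ x) * ∑ y, w x y * f y * (Dw * f x) :=
        mul_le_mul_of_nonneg_left (Finset.sum_le_sum fun y _ => hy y) (by positivity)
    _ = (1 / μ x) * ((∑ y, w x y * f y) * (Dw * f x)) := by rw [Finset.sum_mul]
    _ ≤ (1 / μ x) * (((∑ y, w x y) * f x) * (Dw * f x)) := by gcongr
    _ = ((∑ y, w x y) / μ x) * (Dw * f x ^ 2) := by ring
    _ ≤ D * (Dw * f x ^ 2) := by gcongr
    _ = _ := by ring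

/-- `CDE(n,-K)` forces a relation between `n`, `K` and the degree bound. -/
lemma dim_bound (w : V → V → ℝ) (hw : ∀ x y, 0 ≤ w x y) (hloop : ∀ x, w x x = 0)
    (hsymm : ∀ x y, w x y = w y x)
    (μ : V → ℝ) (hμ : ∀ x, 0 < μ x) (n K : ℝ) (hn : 0 < n) (hCDE : CDEneg w μ n K)
    (x : V) (D : ℝ) (hDx : (∑ y, w x y) / μ x = D)
    (hD : ∀ z, (∑ y, w z y) / μ z ≤ D) (hD0 : 0 < D) :
    D ≤ 2 * n * D + K * n / 2 := by
  classical
  have hm := hμ x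
  set S := ∑ y, w x y with hS
  have hSD : S = D * μ x := by rw [← hDx]; field_simp
  set f : V → ℝ := fun z => if z = x then 2 else 1 with hf
  have hfx : f x = 2 := by simp [hf]
  have hfy : ∀ y, y ≠ x → f y = 1 := fun y h => by simp [hf, h]
  have hfpos : ∀ z, 0 < f z := by intro z; simp only [hf]; split_ifs <;> norm_num
  have hxy : ∀ y, w x y ≠ 0 → y ≠ x := by
    rintro y h rfl; exact h (hloop _)
  -- values at x
  have hlx : graphLap w μ f x = - D := by
    unfold graphLap
    have : ∑ y, w x y * (f y - f x) = - S := by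
      rw [hS, ← Finset.sum_neg_distrib]
      refine Finset.sum_congr rfl fun y _ => ?_
      by_cases h : w x y = 0
      · simp [h]
      · rw [hfx, hfy y (hxy y h)]; ring
    rw [this, hSD]; field_simp
  have hgx : graphGamma w μ f f x = D / 2 := by
    unfold graphGamma
    have : ∑ y, w x y * (f y - f x) * (f y - f x) = S := by
      rw [hS]
      refine Finset.sum_congr rfl fun y _ => ?_
      by_cases h : w x y = 0
      · simp [h]
      · rw [hfx, hfy y (hxy y h)]; ring
    rw [this, hSD]; field_simp
  have hly : ∀ y, y ≠ x → graphLap w μ f y = w x y / μ y := by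
    intro y hy
    unfold graphLap
    rw [Finset.sum_eq_single x]
    · rw [hfx, hfy y hy, hsymm y x]; ring
    · intro z _ hz; rw [hfy z hz, hfy y hy]; ring
    · simp
  have hgy : ∀ y, y ≠ x → graphGamma w μ f f y = w x y / (2 * μ y) := by
    intro y hy
    unfold graphGamma
    rw [Finset.sum_eq_single x]
    · rw [hfx, hfy y hy, hsymm y x]; ring
    · intro z _ hz; rw [hfy z hz, hfy y hy]; ring
    · simp
  have hwy : ∀ y, w x y / μ y ≤ D := by
    intro y
    refine le_trans ?_ (hD y)
    have := hμ y
    refine div_le_div_of_nonneg_right ?_ this.le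
    rw [hsymm x y]
    exact Finset.single_le_sum (f := fun z => w y z) (fun i _ => hw y i) (Finset.mem_univ x)
  have key := hCDE x f hfpos (by rw [hlx]; linarith)
  have hle : graphGamma2Tilde w μ f x ≤ (1 / (2 * μ x)) * ∑ y, w x y * (5 / 2 * D) := by
    have : graphGamma2Tilde w μ f x = (1 / (2 * μ x)) * ∑ y, w x y *
        ((graphGamma w μ f f y - graphGamma w μ f f x)
          - (f y - f x) * (graphLap w μ f y - graphLap w μ f x)
          - (f y - f x) * (graphGamma w μ f f y / f y - graphGamma w μ f f x / f x)) := by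
      exact gamma2_expand w μ hμ x f _ _ _
    rw [this]
    refine mul_le_mul_of_nonneg_left (Finset.sum_le_sum fun y _ => ?_) (by positivity)
    by_cases h : w x y = 0
    · simp [h]
    · refine mul_le_mul_of_nonneg_left ?_ (hw x y)
      have hyx := hxy y h
      rw [hfx, hfy y hyx, hgx, hlx, hgy y hyx, hly y hyx]
      have h1 := hwy y
      have h2 : w x y / (2 * μ y) = (w x y / μ y) / 2 := by
        have := (hμ y).ne'
        field_simp
      rw [h2]
      linarith
  rw [← Finset.sum_mul, ← hS, hSD, hlx, hgx] at *
  have h3 : 1 / (2 * μ x) * (D * μ x * (5 / 2 * D)) = 5 / 4 * D ^ 2 := by field_simp; norm_num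
  rw [h3] at hle
  have h4 : 1 / n * (-D) ^ 2 - K * (D / 2) ≤ 5 / 4 * D ^ 2 := key.trans hle
  have h5 : n * (1 / n * (-D) ^ 2 - K * (D / 2)) ≤ n * (5 / 4 * D ^ 2) :=
    mul_le_mul_of_nonneg_left h4 hn.le
  have h6 : n * (1 / n * (-D) ^ 2 - K * (D / 2)) = D * (D - K * n / 2) := by
    field_simp
  rw [h6] at h5
  have h7 : D * (D - K * n / 2) ≤ D * (2 * n * D) := by
    refine h5.trans ?_
    have : 0 < n * D ^ 2 := by positivity
    nlinarith
  have := le_of_mul_le_mul_left h7 hD0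
  linarith

/-- the static inequality at the maximum point -/
lemma core (w : V → V → ℝ) (hw : ∀ x y, 0 ≤ w x y) (μ : V → ℝ) (hμ : ∀ x, 0 < μ x)
    (n K : ℝ) (hn : 0 < n) (hCDE : CDEneg w μ n K)
    (α : ℝ) (hα : 0 < α) (hα1 : α < 1)
    (f : V → ℝ) (hf : ∀ z, 0 < f z) (v : V → ℝ) (x : V) (t N : ℝ) (ht : 0 < t) (hN : 0 < N)
    (φ H P : V → ℝ) (D Dw : ℝ) (hD : (∑ y, w x y) / μ x ≤ D) (hDw0 : 0 ≤ Dw)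
    (hDw : ∀ y, 0 < w x y → (∑ z, w x z) / w x y ≤ Dw)
    (hvx : graphLap w μ (fun z => f z ^ 2) x = v x)
    (hvy : ∀ y, 0 < w x y → graphLap w μ (fun z => f z ^ 2) y = v y)
    (hP : ∀ z, P z = (1 - α) * graphGamma w μ f f z
      - 1 / 2 * graphLap w μ (fun z => f z ^ 2) z)
    (hH : ∀ z, P z = H z * f z ^ 2)
    (hmax : ∀ y, 0 < w x y → H y * φ y ≤ H x * φ x)
    (hφ : ∀ y, 0 < w x y → φ x ≤ φ y + 1 / N) (hφx : 2 / N ≤ φ x)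
    (htime : 0 ≤ P x * f x ^ 2 + t * (((1 - α) * (2 * graphGamma w μ f (fun z => v z / (2 * f z)) x)
      - 1 / 2 * graphLap w μ v x) * f x ^ 2 - P x * v x))
    (hH0 : 0 < H x) (hHK : K * n / (2 * α) ≤ H x) :
    H x ≤ n / (2 * (1 - α)) * (1 / t + 2 * Dw * D / (N * φ x)) := by
  have hm := hμ x
  have hfx := hf x
  have hφ0 : 0 < φ x := lt_of_lt_of_le (by positivity) hφx
  have hNφ : 1 / N ≤ φ x / 2 := by
    have : 2 / N = 2 * (1 / N) := by ring
    linarith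
  set Q := graphGamma2Tilde w μ f x with hQ
  set P' := (1 - α) * (2 * graphGamma w μ f (fun z => v z / (2 * f z)) x)
      - 1 / 2 * graphLap w μ v x with hP'
  have hG0 := gamma_nonneg w hw μ hμ f x
  set Gm := graphGamma w μ f f x with hGm
  set L := graphLap w μ f x with hL
  have hPx : P x = - α * Gm - f x * L := by
    rw [hP, lap_sq w μ hμ f x]; ring
  have hneg : L < 0 := by
    have h1 : 0 < P x := by rw [hH]; positivity
    have h2 : 0 ≤ α * Gm := by positivity
    by_contra hc
    push Not at hc
    have := mul_nonneg hfx.le hc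
    linarith
  -- step 1
  have e1 : graphLap w μ P x - P' = 2 * (1 - α) * Q := by
    have a1 : graphLap w μ P x = (1 - α) * graphLap w μ (graphGamma w μ f f) x
        - 1 / 2 * graphLap w μ (graphLap w μ (fun z => f z ^ 2)) x := by
      rw [← lap_lin]
      congr 1
      funext z
      exact hP z
    have a2 : graphLap w μ (graphLap w μ (fun z => f z ^ 2)) x = graphLap w μ v x :=
      lap_congr w hw μ x _ _ hvx hvy
    have a4 : ∀ z, graphLap w μ (fun z => f z ^ 2) z = v z →
        v z / (2 * f z) = graphLap w μ f z + graphGamma w μ f f z / f z := by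
      intro z hz
      have := (hf z).ne'
      rw [← hz, lap_sq w μ hμ f z]
      field_simp
    have a3 : graphGamma w μ f (fun z => v z / (2 * f z)) x = graphGamma w μ f (graphLap w μ f) x
        + graphGamma w μ f (fun z => graphGamma w μ f f z / f z) x := by
      rw [← gamma_add]
      exact gamma_congr w hw μ x f _ _ (a4 x hvx) (fun y hy => a4 y (hvy y hy))
    rw [a1, a2, hP', a3, hQ]
    unfold graphGamma2Tilde graphGamma2
    ring
  -- step 3
  have hss := sum_sq_le w hw μ hμ f hf x D Dw hD hDw0 hDw hneg
  have e3 : graphLap w μ P x - H x * v x ≤ H x * (2 / (N * φ x)) * (Dw * D * f x ^ 2) := by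
    refine le_trans ?_ (mul_le_mul_of_nonneg_left hss (by positivity))
    have b1 : graphLap w μ P x - H x * v x
        = (1 / μ x) * ∑ y, w x y * ((H y - H x) * f y ^ 2) := by
      rw [← hvx]
      unfold graphLap
      rw [mul_left_comm (H x), ← mul_sub, Finset.mul_sum (a := H x), ← Finset.sum_sub_distrib]
      congr 1
      refine Finset.sum_congr rfl fun y _ => ?_
      rw [hH x, hH y]
      ring
    have b2 : H x * (2 / (N * φ x)) * (1 / μ x * ∑ y, w x y * f y ^ 2)
        = 1 / μ x * ∑ y, H x * (2 / (N * φ x)) * (w x y * f y ^ 2) := by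
      rw [← Finset.mul_sum]; ring
    have hmi : 0 ≤ 1 / μ x := by positivity
    rw [b1, b2]
    refine mul_le_mul_of_nonneg_left (Finset.sum_le_sum fun y _ => ?_) hmi
    rcases (hw x y).eq_or_lt with h0 | h0
    · rw [← h0]; simp
    · rw [mul_left_comm (H x * (2 / (N * φ x)))]
      refine mul_le_mul_of_nonneg_left ?_ h0.le
      refine mul_le_mul_of_nonneg_right ?_ (sq_nonneg _)
      have c1 := hmax y h0
      have c2 := hφ y h0
      have c3 : φ x / 2 ≤ φ y := by linarith
      rcases le_total (H y - H x) 0 with c4 | c4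
      · exact c4.trans (by positivity)
      · have c5 : (H y - H x) * (φ x / 2) ≤ H x * (1 / N) := by
          have d1 := mul_le_mul_of_nonneg_left c3 c4
          have d2 := mul_le_mul_of_nonneg_left c2 hH0.le
          linarith
        have c6 : H x * (2 / (N * φ x)) = H x * (1 / N) / (φ x / 2) := by field_simp
        have c7 : 0 < φ x / 2 := by positivity
        rw [c6, le_div_iff₀ c7]
        exact c5
  -- step 4
  have hq : 0 < f x ^ 2 := by positivity
  have e4 : H x * v x - H x * f x ^ 2 / t ≤ P' := by
    rw [hH x] at htime
    have : 0 ≤ f x ^ 2 * (t * (P' - (H x * v x - H x * f x ^ 2 / t))) := by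
      have h1 : f x ^ 2 * (t * (P' - (H x * v x - H x * f x ^ 2 / t)))
        = H x * f x ^ 2 * f x ^ 2 + t * (P' * f x ^ 2 - H x * f x ^ 2 * v x) := by
        field_simp
        ring
      rw [h1]; exact htime
    have h2 := nonneg_of_mul_nonneg_right this hq
    have h3 := nonneg_of_mul_nonneg_right h2 ht
    linarith
  have key : Q ≥ (1 / n) * L ^ 2 - K * Gm := hCDE x f hf hneg
  set B := 1 / t + 2 * Dw * D / (N * φ x) with hB
  have e5 : 2 * (1 - α) * Q ≤ H x * f x ^ 2 * B := by
    have : H x * f x ^ 2 * B = H x * f x ^ 2 / t + H x * (2 / (N * φ x)) * (Dw * D * f x ^ 2) := by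
      rw [hB]; ring
    linarith
  have h1a : 0 < 1 - α := by linarith
  have e6 : 2 * (1 - α) * ((1 / n) * L ^ 2 - K * Gm) ≤ H x * f x ^ 2 * B :=
    le_trans (mul_le_mul_of_nonneg_left key (by positivity)) e5
  have hfL : f x * L = - (H x * f x ^ 2 + α * Gm) := by
    rw [← hH]; linarith
  have hLq : L ^ 2 * f x ^ 2 = (H x * f x ^ 2 + α * Gm) ^ 2 := by
    have : L ^ 2 * f x ^ 2 = (f x * L) ^ 2 := by ring
    rw [this, hfL]; ring
  have hKn : K * n ≤ 2 * α * H x := by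
    rw [div_le_iff₀ (by positivity)] at hHK; linarith
  generalize f x ^ 2 = q at *
  have e7 : n * q * (2 * (1 - α) * ((1 / n) * L ^ 2 - K * Gm)) ≤ n * q * (H x * q * B) :=
    mul_le_mul_of_nonneg_left e6 (by positivity)
  have e8 : n * q * (2 * (1 - α) * ((1 / n) * L ^ 2 - K * Gm))
      = 2 * (1 - α) * (L ^ 2 * q - K * n * Gm * q) := by
    field_simp
  rw [e8, hLq] at e7
  have e9 : H x ^ 2 * q ^ 2 ≤ (H x * q + α * Gm) ^ 2 - K * n * Gm * q := by
    have d1 : K * n * (Gm * q) ≤ 2 * α * H x * (Gm * q) :=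
      mul_le_mul_of_nonneg_right hKn (by positivity)
    have d2 : 0 ≤ (α * Gm) ^ 2 := sq_nonneg _
    linarith
  have e10 : 2 * (1 - α) * (H x ^ 2 * q ^ 2) ≤ n * q * (H x * q * B) :=
    le_trans (mul_le_mul_of_nonneg_left e9 (by positivity)) e7
  have e11 : (H x * q ^ 2) * (2 * (1 - α) * H x) ≤ (H x * q ^ 2) * (n * B) := by linarith
  have e12 := le_of_mul_le_mul_left e11 (by positivity)
  have h2a : 0 < 2 * (1 - α) := by positivity
  rw [div_mul_eq_mul_div, le_div_iff₀ h2a]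
  linarith

end Helpers

lemma deriv_nonneg_of_left_max (g : ℝ → ℝ) (g' t : ℝ) (ht : 0 < t) (hg : HasDerivAt g g' t)
    (h : ∀ s ∈ Set.Icc 0 t, g s ≤ g t) : 0 ≤ g' := by
  have h1 := (hasDerivWithinAt_iff_tendsto_slope' (s := Set.Iio t) (by simp)).1
    (hg.hasDerivWithinAt (s := Set.Iio t))
  refine ge_of_tendsto h1 ?_
  have h2 : Set.Ioo 0 t ∈ nhdsWithin t (Set.Iio t) := Ioo_mem_nhdsLT ht
  filter_upwards [h2] with s hs
  rw [slope_def_field]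
  have := h s ⟨hs.1.le, hs.2.le⟩
  exact div_nonneg_of_nonpos (by linarith) (by linarith [hs.2])

lemma hasDerivAt_lap {V : Type*} [Fintype V] (w : V → V → ℝ) (μ : V → ℝ) (F : V → ℝ → ℝ)
    (F' : V → ℝ) (s : ℝ) (h : ∀ z, HasDerivAt (F z) (F' z) s) (x : V) :
    HasDerivAt (fun s => graphLap w μ (fun z => F z s) x) (graphLap w μ F' x) s := by
  unfold graphLap
  exact (HasDerivAt.fun_sum (u := Finset.univ) fun y _ =>
    ((h y).sub (h x)).const_mul (w x y)).const_mul _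

lemma hasDerivAt_gamma {V : Type*} [Fintype V] (w : V → V → ℝ) (μ : V → ℝ) (F : V → ℝ → ℝ)
    (F' : V → ℝ) (s : ℝ) (h : ∀ z, HasDerivAt (F z) (F' z) s) (x : V) :
    HasDerivAt (fun s => graphGamma w μ (fun z => F z s) (fun z => F z s) x)
      (2 * graphGamma w μ (fun z => F z s) F' x) s := by
  unfold graphGamma
  have h0 : ∀ y ∈ (Finset.univ : Finset V),
      HasDerivAt (fun s => w x y * (F y s - F x s) * (F y s - F x s))
      (2 * (w x y * (F y s - F x s) * (F' y - F' x))) s := by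
    intro y _
    have hd : HasDerivAt (fun s => F y s - F x s) (F' y - F' x) s := (h y).sub (h x)
    refine ((hd.const_mul (w x y)).mul hd).congr_deriv ?_
    ring
  refine ((HasDerivAt.fun_sum h0).const_mul (1 / (2 * μ x))).congr_deriv ?_
  rw [← Finset.mul_sum]
  ring

/-- Improved Li-Yau inequality under `CDE(n,-K)`: for a positive solution of the heat
equation in `B(x₀, 2R)`, for any `0 < α < 1`, `t > 0` and `x ∈ B(x₀, R)`,
`(1-α)Γ(√u)/u - ∂_t√u/√u ≤ min{D_μ, n/((1-α)2t) + n(2+D_w)D_μ/((1-α)R) + Kn/(2α)}`. -/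
theorem li_yau_improved {V : Type*} [Fintype V] [Nonempty V]
    (w : V → V → ℝ) (hw : ∀ x y, 0 ≤ w x y) (hloop : ∀ x, w x x = 0)
    (hsymm : ∀ x y, w x y = w y x)
    (μ : V → ℝ) (hμ : ∀ x, 0 < μ x)
    (G : SimpleGraph V) (hadj : ∀ x y, G.Adj x y ↔ x ≠ y ∧ 0 < w x y)
    (hconn : G.Connected)
    (n K : ℝ) (hn : 0 < n) (hK : 0 < K) (hCDE : CDEneg w μ n K)
    (R : ℝ) (hR : 1 < R) (x₀ : V)
    (u : V → ℝ → ℝ) (hu : ∀ x t, 0 < u x t)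
    (hdiff : ∀ x, Differentiable ℝ (u x))
    (hheat : ∀ x t, 0 < t → (G.dist x₀ x : ℝ) < 2 * R →
      graphLap w μ (fun z => u z t) x = deriv (u x) t)
    (Dw Dμ : ℝ)
    (hDw : IsGreatest {r : ℝ | ∃ x y, 0 < w x y ∧ (∑ z, w x z) / w x y = r} Dw)
    (hDμ : Dμ = Finset.univ.sup' Finset.univ_nonempty (fun z => (∑ y, w z y) / μ z))
    (α : ℝ) (hα : 0 < α) (hα1 : α < 1) (t : ℝ) (ht : 0 < t)
    (x : V) (hx : (G.dist x₀ x : ℝ) < R) :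
    (1 - α) * graphGamma w μ (fun z => Real.sqrt (u z t)) (fun z => Real.sqrt (u z t)) x
        / u x t
      - deriv (fun s => Real.sqrt (u x s)) t / Real.sqrt (u x t)
      ≤ min Dμ (n / ((1 - α) * 2 * t) + n * (2 + Dw) * Dμ / ((1 - α) * R)
          + K * n / (2 * α)) := by
  classical
  have hDμz : ∀ z, (∑ y, w z y) / μ z ≤ Dμ := by
    intro z
    rw [hDμ]
    exact Finset.le_sup' (fun z => (∑ y, w z y) / μ z) (Finset.mem_univ z)
  obtain ⟨xm, -, hxm⟩ := Finset.exists_mem_eq_sup' Finset.univ_nonempty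
    (fun z => (∑ y, w z y) / μ z)
  have hxm' : (∑ y, w xm y) / μ xm = Dμ := by rw [hDμ, hxm]
  obtain ⟨⟨xa, xb, hab, habD⟩, hDwub⟩ := hDw
  have hsab : w xa xb ≤ ∑ z, w xa z :=
    Finset.single_le_sum (f := fun z => w xa z) (fun i _ => hw xa i) (Finset.mem_univ xb)
  have hDw0 : 0 ≤ Dw := by
    rw [← habD]; exact div_nonneg (hab.le.trans hsab) hab.le
  have hDwz : ∀ x y, 0 < w x y → (∑ z, w x z) / w x y ≤ Dw := fun x y h => hDwub ⟨x, y, h, rfl⟩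
  have hDμ0 : 0 < Dμ :=
    lt_of_lt_of_le (div_pos (hab.trans_le hsab) (hμ xa)) (hDμz xa)
  have hdim := dim_bound w hw hloop hsymm μ hμ n K hn hCDE xm Dμ hxm' hDμz hDμ0
  have h1a : 0 < 1 - α := by linarith
  have hR0 : 0 < R := by linarith
  -- the functions
  have hsq : ∀ z s, Real.sqrt (u z s) ^ 2 = u z s := fun z s => Real.sq_sqrt (hu z s).le
  have hsp : ∀ z s, 0 < Real.sqrt (u z s) := fun z s => Real.sqrt_pos.2 (hu z s)
  have hud : ∀ z s, HasDerivAt (u z) (deriv (u z) s) s := fun z s => (hdiff z s).hasDerivAt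
  have hfd : ∀ z s, HasDerivAt (fun s => Real.sqrt (u z s))
      (deriv (u z) s / (2 * Real.sqrt (u z s))) s := fun z s => (hud z s).sqrt (hu z s).ne'
  obtain ⟨P, hP⟩ : ∃ P : V → ℝ → ℝ, ∀ z s, P z s =
      (1 - α) * graphGamma w μ (fun z => Real.sqrt (u z s)) (fun z => Real.sqrt (u z s)) z
      - 1 / 2 * graphLap w μ (fun z => u z s) z := ⟨_, fun _ _ => rfl⟩
  have hPd : ∀ z s, HasDerivAt (P z)
      ((1 - α) * (2 * graphGamma w μ (fun z => Real.sqrt (u z s))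
        (fun z => deriv (u z) s / (2 * Real.sqrt (u z s))) z)
      - 1 / 2 * graphLap w μ (fun z => deriv (u z) s) z) s := by
    intro z s
    have : P z = fun s =>
      (1 - α) * graphGamma w μ (fun z => Real.sqrt (u z s)) (fun z => Real.sqrt (u z s)) z
      - 1 / 2 * graphLap w μ (fun z => u z s) z := funext (hP z)
    rw [this]
    exact ((hasDerivAt_gamma w μ (fun z s => Real.sqrt (u z s)) _ s (fun z => hfd z s) z).const_mul
      (1 - α)).sub ((hasDerivAt_lap w μ u _ s (fun z => hud z s) z).const_mul (1 / 2))
  obtain ⟨H, hH⟩ : ∃ H : V → ℝ → ℝ, ∀ z s, H z s = P z s / u z s := ⟨_, fun _ _ => rfl⟩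
  have hPH : ∀ z s, P z s = H z s * u z s := by
    intro z s
    rw [hH]; have := (hu z s).ne'; field_simp
  have hHd : ∀ z s, HasDerivAt (H z)
      ((((1 - α) * (2 * graphGamma w μ (fun z => Real.sqrt (u z s))
        (fun z => deriv (u z) s / (2 * Real.sqrt (u z s))) z)
      - 1 / 2 * graphLap w μ (fun z => deriv (u z) s) z) * u z s - P z s * deriv (u z) s)
        / u z s ^ 2) s := by
    intro z s
    have : H z = fun s => P z s / u z s := funext (hH z)
    rw [this]
    exact (hPd z s).div (hud z s) (hu z s).ne'
  have hHle : ∀ z s, H z s ≤ Dμ := by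
    intro z s
    have h1 := neg_lap_le w hw μ hμ (fun z => Real.sqrt (u z s)) (fun z => hsp z s) z Dμ (hDμz z)
    have h2 := gamma_nonneg w hw μ hμ (fun z => Real.sqrt (u z s)) z
    have h3 := lap_sq w μ hμ (fun z => Real.sqrt (u z s)) z
    simp only [hsq] at h3
    rw [hH, hP, div_le_iff₀ (hu z s), h3, ← hsq z s]
    have h4 := mul_le_mul_of_nonneg_left h1 (hsp z s).le
    have h5 := mul_nonneg hα.le h2
    simp only [hsq] at h4 ⊢
    have h6 : Real.sqrt (u z s) * (Dμ * Real.sqrt (u z s)) = Dμ * u z s := by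
      have : Real.sqrt (u z s) * (Dμ * Real.sqrt (u z s)) = Dμ * Real.sqrt (u z s) ^ 2 := by ring
      rw [this, hsq]
    rw [h6] at h4
    linarith
  -- rewrite the left-hand side
  have hx2 : (G.dist x₀ x : ℝ) < 2 * R := by linarith
  have hLHS : (1 - α) * graphGamma w μ (fun z => Real.sqrt (u z t)) (fun z => Real.sqrt (u z t)) x
        / u x t - deriv (fun s => Real.sqrt (u x s)) t / Real.sqrt (u x t) = H x t := by
    rw [hH, hP, (hfd x t).deriv, hheat x t ht hx2, sub_div]
    congr 1
    rw [div_div, mul_assoc, ← sq, hsq]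
    ring
  rw [hLHS]
  refine le_min (hHle x t) ?_
  -- cutoff
  set m : ℕ := ⌈2 * R⌉₊ with hm
  set r : ℕ := ⌈R⌉₊ with hr
  have hmR : 2 * R ≤ (m : ℝ) := Nat.le_ceil _
  have hrR : (r : ℝ) < R + 1 := Nat.ceil_lt_add_one hR0.le
  have hrm : r ≤ m := Nat.ceil_le_ceil (by linarith)
  set N : ℕ := m + 1 - r with hN
  have hNR : R < (N : ℝ) := by
    have : (N : ℝ) = m + 1 - r := by
      rw [hN, Nat.cast_sub (by omega)]; push_cast; ring
    rw [this]; linarith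
  have hN0 : (0 : ℝ) < N := by linarith
  have hball : ∀ z, G.dist x₀ z < m → (G.dist x₀ z : ℝ) < 2 * R := fun z h => Nat.lt_ceil.1 h
  have hxr : G.dist x₀ x < r := Nat.lt_ceil.2 hx
  obtain ⟨k, hk⟩ : ∃ k : V → ℕ, ∀ z, k z = min N (m - G.dist x₀ z) := ⟨_, fun _ => rfl⟩
  obtain ⟨φ, hφ⟩ : ∃ φ : V → ℝ, ∀ z, φ z = (k z : ℝ) / N := ⟨_, fun _ => rfl⟩
  have hφ0 : ∀ z, 0 ≤ φ z := fun z => by rw [hφ]; positivity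
  have hφ1 : ∀ z, φ z ≤ 1 := fun z => by
    rw [hφ, div_le_one hN0]
    have : k z ≤ N := by rw [hk]; omega
    exact_mod_cast this
  have hφx : φ x = 1 := by
    have : k x = N := by rw [hk]; omega
    rw [hφ, this]; exact div_self hN0.ne'
  have hdist : ∀ y z, 0 < w y z → G.dist x₀ z ≤ G.dist x₀ y + 1 := by
    intro y z h
    have hne : y ≠ z := by rintro rfl; rw [hloop] at h; exact lt_irrefl _ h
    have h1 : G.dist y z = 1 := SimpleGraph.dist_eq_one_iff_adj.2 ((hadj y z).2 ⟨hne, h⟩)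
    have := hconn.dist_triangle (u := x₀) (v := y) (w := z)
    omega
  -- the maximum
  have hex : ∀ z, ∃ s ∈ Set.Icc 0 t, ∀ s' ∈ Set.Icc 0 t, s' * φ z * H z s' ≤ s * φ z * H z s := by
    intro z
    have hc : Continuous (H z) := continuous_iff_continuousAt.2 fun s => (hHd z s).continuousAt
    obtain ⟨s, hs, hmx⟩ := isCompact_Icc.exists_isMaxOn (Set.nonempty_Icc.2 ht.le)
      (f := fun s => s * φ z * H z s) (by fun_prop)
    exact ⟨s, hs, fun s' hs' => hmx hs'⟩
  choose S hS hSmax using hex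
  obtain ⟨p, -, hp⟩ := Finset.exists_max_image Finset.univ
    (fun z => S z * φ z * H z (S z)) Finset.univ_nonempty
  have hmax : ∀ z, ∀ s ∈ Set.Icc 0 t, s * φ z * H z s ≤ S p * φ p * H p (S p) := fun z s hs =>
    (hSmax z s hs).trans (hp z (Finset.mem_univ z))
  set τ := S p with hτ
  have hτ0 : 0 ≤ τ := (hS p).1
  have hτt : τ ≤ t := (hS p).2
  have hfin := hmax x t ⟨ht.le, le_rfl⟩
  rw [hφx, mul_one] at hfin
  set A := n / ((1 - α) * 2 * t) with hA
  set B := n * (2 + Dw) * Dμ / ((1 - α) * R) with hB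
  set C := K * n / (2 * α) with hC
  have hA0 : 0 ≤ A := by positivity
  have hB0 : 0 ≤ B := by positivity
  have hC0 : 0 ≤ C := by positivity
  suffices hM : τ * φ p * H p τ ≤ t * (A + B + C) from
    le_of_mul_le_mul_left (hfin.trans hM) ht
  have hM0 : 0 ≤ t * (A + B + C) := by positivity
  rcases hτ0.eq_or_lt with h0 | hτp
  · rw [← h0]; simpa using hM0
  rcases (hφ0 p).eq_or_lt with h0 | hφp
  · rw [← h0]; simpa using hM0
  rcases le_or_gt (H p τ) 0 with h0 | hHp
  · exact (mul_nonpos_of_nonneg_of_nonpos (by positivity) h0).trans hM0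
  rcases le_or_gt (H p τ) C with h0 | hHC
  · calc τ * φ p * H p τ ≤ t * 1 * C := by gcongr; exact hφ1 p
      _ ≤ t * (A + B + C) := by rw [mul_one]; gcongr; linarith
  by_cases hk2 : k p ≤ 1
  · have h1 : φ p ≤ 1 / R := by
      rw [hφ]
      have : (k p : ℝ) ≤ 1 := by exact_mod_cast hk2
      gcongr
    have h2 : Dμ / R ≤ B + C := by
      have h3 : 2 * n * Dμ / R ≤ B := by
        rw [hB, div_le_div_iff₀ hR0 (by positivity)]
        have : 0 ≤ n * Dμ * R := by positivity
        have h5 : 0 ≤ n * Dμ * R * Dw := by positivity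
        have h6 : 0 ≤ n * Dμ * R * α := by positivity
        linarith
      have h4 : K * n / 2 / R ≤ C := by
        rw [hC, div_div]
        apply div_le_div_of_nonneg_left (by positivity) (by positivity)
        nlinarith
      have h5 : Dμ / R ≤ (2 * n * Dμ + K * n / 2) / R := by gcongr
      rw [add_div] at h5
      linarith
    calc τ * φ p * H p τ ≤ t * (1 / R) * Dμ := by gcongr; exact hHle p τ
      _ = t * (Dμ / R) := by ring
      _ ≤ t * (A + B + C) := by gcongr; linarith
  push Not at hk2
  have hkp := hk p
  have hpm : G.dist x₀ p + 2 ≤ m := by omega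
  have htime := deriv_nonneg_of_left_max (fun s => s * H p s) _ τ hτp
    ((hasDerivAt_id τ).mul (hHd p τ)) (by
      intro s hs
      have h1 := hmax p s ⟨hs.1, hs.2.trans hτt⟩
      have h2 : φ p * (s * H p s) ≤ φ p * (τ * H p τ) := by linarith
      exact le_of_mul_le_mul_left h2 hφp)
  have hup := hu p τ
  have hcore := core w hw μ hμ n K hn hCDE α hα hα1 (fun z => Real.sqrt (u z τ))
    (fun z => hsp z τ) (fun z => deriv (u z) τ) p τ N hτp hN0 φ (fun z => H z τ) (fun z => P z τ)
    Dμ Dw (hDμz p) hDw0 (hDwz p)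
    (by simp only [hsq]; exact hheat p τ hτp (hball p (by omega)))
    (by
      intro y hy
      simp only [hsq]
      have := hdist p y hy
      exact hheat y τ hτp (hball y (by omega)))
    (by intro z; simp only [hsq]; exact hP z τ)
    (by intro z; simp only [hsq]; exact hPH z τ)
    (by
      intro y hy
      have h1 := hmax y τ ⟨hτ0, hτt⟩
      have h2 : τ * (H y τ * φ y) ≤ τ * (H p τ * φ p) := by linarith
      exact le_of_mul_le_mul_left h2 hτp)
    (by
      intro y hy
      have h1 := hdist p y hy
      have h2 : k p ≤ k y + 1 := by rw [hk, hk]; omega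
      have h3 : (k p : ℝ) ≤ k y + 1 := by exact_mod_cast h2
      rw [hφ, hφ, ← add_div]
      gcongr)
    (by
      rw [hφ]
      have : (2 : ℝ) ≤ k p := by exact_mod_cast hk2
      gcongr)
    (by
      simp only [hsq]
      have h1 := mul_nonneg htime (sq_nonneg (u p τ))
      refine h1.trans_eq ?_
      simp only [id]
      rw [hPH p τ]
      field_simp)
    hHp hHC.le
  have hMle : τ * φ p * H p τ ≤ τ * φ p * (n / (2 * (1 - α)) * (1 / τ + 2 * Dw * Dμ / (N * φ p))) :=
    mul_le_mul_of_nonneg_left hcore (by positivity)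
  have he : τ * φ p * (n / (2 * (1 - α)) * (1 / τ + 2 * Dw * Dμ / (N * φ p)))
      = n / (2 * (1 - α)) * (φ p + τ * (2 * Dw * Dμ) / N) := by
    field_simp
  rw [he] at hMle
  refine hMle.trans ?_
  calc n / (2 * (1 - α)) * (φ p + τ * (2 * Dw * Dμ) / N)
      ≤ n / (2 * (1 - α)) * (1 + t * (2 * Dw * Dμ) / R) := by
        gcongr
        exact hφ1 p
    _ = t * (A + n * Dw * Dμ / ((1 - α) * R)) := by
        rw [hA]; field_simp
    _ ≤ t * (A + B + C) := by
        have : n * Dw * Dμ / ((1 - α) * R) ≤ B := by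
          rw [hB]
          gcongr
          linarith
        exact mul_le_mul_of_nonneg_left (by linarith) ht.le
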